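/- For every n > 1, the number of α-equivalence classes of closed linear lambda terms with n total applications and abstractions equals the number of isomorphism classes of classical rooted trivalent maps with n − 1 trivalent vertices. -/

import Mathlib

/-! ## Lambda terms and linearity -/

inductive Term : Type
  | var : ℕ → Term
  | app : Term → Term → Term
  | lam : ℕ → Term → Term
deriving DecidableEq

namespace Term

/-- total number of applications and abstractions -/
def size : Term → ℕ
  | var _ => 0
  | app t u => size t + size u + 1
  | lam _ t => size t + 1

def apps : Term → ℕ
  | var _ => 0
  | app t u => apps t + apps u + 1
  | lam _ t => apps t

def lams : Term → ℕ
  | var _ => 0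
  | app t u => lams t + lams u
  | lam _ t => lams t + 1

/-- all variable names occurring in a term (free, bound or binding) -/
def varsList : Term → List ℕ
  | var z => [z]
  | app t u => varsList t ++ varsList u
  | lam z t => z :: varsList t

/-- the list of free variables -/
def freeList : Term → List ℕ
  | var z => [z]
  | app t u => freeList t ++ freeList u
  | lam z t => (freeList t).filter (fun y => y ≠ z)

/-- the list of bound (binder) variables -/
def boundVars : Term → List ℕ
  | var _ => []
  | app t u => boundVars t ++ boundVars u
  | lam z t => z :: boundVars t

/-- rename the free occurrences of `x` to `y` -/
def rename (x y : ℕ) : Term → Term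
  | var z => if z = x then var y else var z
  | app t u => app (rename x y t) (rename x y u)
  | lam z t => if z = x then lam z t else lam z (rename x y t)

/-- substitution of `u` for the free occurrences of `x` -/
def subst (u : Term) (x : ℕ) : Term → Term
  | var z => if z = x then u else var z
  | app t₁ t₂ => app (subst u x t₁) (subst u x t₂)
  | lam z t => if z = x then lam z t else lam z (subst u x t)

end Term

/-- the linearity relation `Γ ⊢ t` between contexts and lambda terms -/
inductive Linear : List ℕ → Term → Prop
  | var (x : ℕ) : Linear [x] (.var x)
  | app {Γ Δ : List ℕ} {t u : Term} : Linear Γ t → Linear Δ u →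
      (Γ ++ Δ).Nodup → Linear (Γ ++ Δ) (.app t u)
  | lam {Γ : List ℕ} {x : ℕ} {t : Term} : Linear (Γ ++ [x]) t → Linear Γ (.lam x t)
  | exch {Γ Δ : List ℕ} {x y : ℕ} {t : Term} :
      Linear (Γ ++ y :: x :: Δ) t → Linear (Γ ++ x :: y :: Δ) t

/-! ## Alpha equivalence -/

/-- change of a bound variable somewhere inside a term -/
inductive BoundStep : Term → Term → Prop
  | here {x y : ℕ} {u : Term} : y ∉ u.varsList →
      BoundStep (.lam x u) (.lam y (u.rename x y))
  | appL {t t' u : Term} : BoundStep t t' → BoundStep (.app t u) (.app t' u)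
  | appR {t u u' : Term} : BoundStep u u' → BoundStep (.app t u) (.app t u')
  | lam {x : ℕ} {t t' : Term} : BoundStep t t' → BoundStep (.lam x t) (.lam x t')

/-- a single change of a free or bound variable -/
inductive AlphaStep : List ℕ × Term → List ℕ × Term → Prop
  | free {Γ₁ Γ₂ : List ℕ} {x y : ℕ} {t : Term} :
      y ∉ t.varsList → y ∉ Γ₁ → y ∉ Γ₂ →
      AlphaStep (Γ₁ ++ x :: Γ₂, t) (Γ₁ ++ y :: Γ₂, t.rename x y)
  | bound {Γ : List ℕ} {t t' : Term} : BoundStep t t' → AlphaStep (Γ, t) (Γ, t')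

/-- alpha equivalence of linear lambda terms-in-context -/
def Alpha : List ℕ × Term → List ℕ × Term → Prop := Relation.EqvGen AlphaStep


/-- the data of a classical rooted trivalent map -/
structure CMap : Type 1 where
  carrier : Type
  v : carrier → carrier
  e : carrier → carrier
  root : carrier

/-- `M` is a classical rooted trivalent map: a transitive
`Γ₃ = ⟨v, e ∣ v³ = e² = 1⟩`-set on which `v` and `e` act without fixed
points, with a distinguished root element -/
structure IsCMap (M : CMap) : Prop where
  v_cube : ∀ x, M.v (M.v (M.v x)) = x
  e_sq : ∀ x, M.e (M.e x) = x
  trans : ∀ x y, Relation.EqvGen (fun a b => M.v a = b ∨ M.e a = b) x y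
  v_free : ∀ x, M.v x ≠ x
  e_free : ∀ x, M.e x ≠ x

/-- isomorphism of classical rooted trivalent maps -/
def CIso (M M' : CMap) : Prop :=
  ∃ h : M.carrier ≃ M'.carrier,
    (∀ x, h (M.v x) = M'.v (h x)) ∧ (∀ x, h (M.e x) = M'.e (h x)) ∧
    h M.root = M'.root

/-- closed linear lambda terms with `n` total applications and abstractions -/
def ClosedLin (n : ℕ) :=
  {p : List ℕ × Term // Linear p.1 p.2 ∧ p.1 = [] ∧ Term.size p.2 = n}

/-- classical rooted trivalent maps with `m` trivalent vertices -/
def ClassicalRTM (m : ℕ) := {M : CMap // IsCMap M ∧ Nat.card M.carrier = 3 * m}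

/-! ## Reading terms off maps with leaves -/

namespace LinMap

open Function

/-- a `Γ₃`-set on which `e` acts freely (fixed points of `w` are leaves) -/
structure Good {D : Type} (w e : D → D) : Prop where
  w3 : ∀ x, w (w (w x)) = x
  e2 : ∀ x, e (e x) = x
  ef : ∀ x, e x ≠ x

/-- connectedness -/
def Conn {D : Type} (w e : D → D) : D → D → Prop :=
  Relation.EqvGen (fun a b => w a = b ∨ e a = b)

open Classical in
/-- remove the vertex containing `d`, replacing it by three leaves -/
noncomputable def cut {D : Type} (w : D → D) (d : D) : D → D :=
  fun x => if x = d ∨ x = w d ∨ x = w (w d) then x else w x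

/-- the term `t` is read off the component of the leaf `r`, with variables placed by `ρ` -/
def Reads {D : Type} (e : D → D) : Term → (D → D) → D → (ℕ → D) → Prop
  | .var x, w, r, ρ => w r = r ∧ w (e r) = e r ∧ ρ x = e r
  | .app t u, w, r, ρ => w r = r ∧ w (e r) ≠ e r ∧
      Reads e t (cut w (e r)) (w (e r)) ρ ∧ Reads e u (cut w (e r)) (w (w (e r))) ρ ∧
      ¬ Conn (cut w (e r)) e (w (e r)) (w (w (e r)))
  | .lam x t, w, r, ρ => w r = r ∧ w (e r) ≠ e r ∧
      Reads e t (cut w (e r)) (w (e r)) (update ρ x (w (w (e r)))) ∧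
      Conn (cut w (e r)) e (w (e r)) (w (w (e r)))

section basic
variable {D : Type} {w e : D → D}

lemma Conn.refl (x : D) : Conn w e x x := Relation.EqvGen.refl x
lemma Conn.symm {x y : D} (h : Conn w e x y) : Conn w e y x := Relation.EqvGen.symm _ _ h
lemma Conn.trans {x y z : D} (h : Conn w e x y) (h' : Conn w e y z) : Conn w e x z :=
  Relation.EqvGen.trans _ _ _ h h'
lemma Conn.sw (x : D) : Conn w e x (w x) := Relation.EqvGen.rel _ _ (Or.inl rfl)
lemma Conn.se (x : D) : Conn w e x (e x) := Relation.EqvGen.rel _ _ (Or.inr rfl)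

lemma Conn.closed (hg : Good w e) {P : D → Prop} (hw : ∀ x, P x → P (w x))
    (he : ∀ x, P x → P (e x)) {x y : D} (h : Conn w e x y) : P x ↔ P y := by
  induction h with
  | rel x y h =>
    rcases h with rfl | rfl
    · exact ⟨hw x, fun h => by have := hw _ (hw _ h); rwa [hg.w3] at this⟩
    · exact ⟨he x, fun h => by have := he _ h; rwa [hg.e2] at this⟩
  | refl x => rfl
  | symm x y _ ih => exact ih.symm
  | trans x y z _ _ i1 i2 => exact i1.trans i2

lemma Good.inj (hg : Good w e) {x y : D} (h : w x = w y) : x = y := by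
  rw [← hg.w3 x, h, hg.w3]

lemma Good.einj (hg : Good w e) {x y : D} (h : e x = e y) : x = y := by
  rw [← hg.e2 x, h, hg.e2]

lemma cut_good (hg : Good w e) (d : D) : Good (cut w d) e := by
  refine ⟨fun x => ?_, hg.e2, hg.ef⟩
  have h3 := hg.w3
  have hi := @Good.inj _ _ _ hg
  unfold cut
  grind

lemma cut_fix (hg : Good w e) (d x : D) :
    cut w d x = x ↔ w x = x ∨ x = d ∨ x = w d ∨ x = w (w d) := by
  unfold cut
  grind

lemma cut_of {d x : D} (h1 : x ≠ d) (h2 : x ≠ w d) (h3 : x ≠ w (w d)) : cut w d x = w x := by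
  unfold cut
  grind

lemma cut_conn {d x y : D} (h : Conn (cut w d) e x y) : Conn w e x y := by
  induction h with
  | rel x y h =>
    rcases h with rfl | rfl
    · unfold cut
      split_ifs
      · exact Conn.refl _
      · exact Conn.sw _
    · exact Conn.se _
  | refl x => exact Conn.refl _
  | symm x y _ ih => exact ih.symm
  | trans x y z _ _ i1 i2 => exact i1.trans i2

/-- the three darts at the root vertex -/
lemma root_distinct (hg : Good w e) {r : D} (hr : w r = r) (hd : w (e r) ≠ e r) :
    r ≠ e r ∧ r ≠ w (e r) ∧ r ≠ w (w (e r)) ∧ e r ≠ w (e r) ∧ e r ≠ w (w (e r)) ∧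
      w (e r) ≠ w (w (e r)) := by
  have h3 := hg.w3
  have hi := @Good.inj _ _ _ hg
  have := hg.ef r
  grind

lemma conn_root (hg : Good w e) {r : D} (hr : w r = r) {x : D}
    (h : Conn (cut w (e r)) e r x ∨ Conn (cut w (e r)) e (e r) x) : x = r ∨ x = e r := by
  have key : ∀ z, (z = r ∨ z = e r) → Conn (cut w (e r)) e z x → x = r ∨ x = e r := by
    intro z hz h
    refine (Conn.closed (cut_good hg _) (P := fun x => x = r ∨ x = e r) ?_ ?_ h).1 hz
    · intro x hx
      have : cut w (e r) x = x := by
        rw [cut_fix hg]; grind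
      rw [this]; exact hx
    · have := hg.e2
      grind
  rcases h with h | h
  · exact key _ (Or.inl rfl) h
  · exact key _ (Or.inr rfl) h

lemma conn_avoid (hg : Good w e) {r : D} (hr : w r = r) (hd : w (e r) ≠ e r) {x : D}
    (h : Conn (cut w (e r)) e (w (e r)) x ∨ Conn (cut w (e r)) e (w (w (e r))) x) :
    x ≠ r ∧ x ≠ e r := by
  have hh := root_distinct hg hr hd
  constructor
  · rintro rfl
    rcases h with h | h
    · have := conn_root hg hr (Or.inl h.symm); grind
    · have := conn_root hg hr (Or.inl h.symm); grind
  · rintro rfl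
    rcases h with h | h
    · have := conn_root hg hr (Or.inr h.symm); grind
    · have := conn_root hg hr (Or.inr h.symm); grind

lemma conn_iff (hg : Good w e) {r : D} (hr : w r = r) {x : D} :
    Conn w e r x ↔ x = r ∨ x = e r ∨ Conn (cut w (e r)) e (w (e r)) x ∨
      Conn (cut w (e r)) e (w (w (e r))) x := by
  constructor
  · intro h
    refine (Conn.closed hg (P := fun x => x = r ∨ x = e r ∨ Conn (cut w (e r)) e (w (e r)) x ∨
      Conn (cut w (e r)) e (w (w (e r))) x) ?_ ?_ h).1 (Or.inl rfl)
    · intro x hx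
      by_cases h1 : x = e r
      · subst h1; exact Or.inr (Or.inr (Or.inl (Conn.refl _)))
      by_cases h2 : x = w (e r)
      · subst h2; exact Or.inr (Or.inr (Or.inr (Conn.refl _)))
      by_cases h3 : x = w (w (e r))
      · subst h3; exact Or.inr (Or.inl (hg.w3 _))
      have hc := cut_of h1 h2 h3
      rcases hx with rfl | h | h | h
      · exact Or.inl hr
      · exact absurd h h1
      · exact Or.inr (Or.inr (Or.inl (h.trans (hc ▸ Conn.sw x))))
      · exact Or.inr (Or.inr (Or.inr (h.trans (hc ▸ Conn.sw x))))
    · intro x hx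
      rcases hx with rfl | rfl | h | h
      · exact Or.inr (Or.inl rfl)
      · exact Or.inl (hg.e2 _)
      · exact Or.inr (Or.inr (Or.inl (h.trans (Conn.se x))))
      · exact Or.inr (Or.inr (Or.inr (h.trans (Conn.se x))))
  · have h1 : Conn w e r (e r) := Conn.se r
    have h2 : Conn w e r (w (e r)) := h1.trans (Conn.sw _)
    have h3 : Conn w e r (w (w (e r))) := h2.trans (Conn.sw _)
    rintro (rfl | rfl | h | h)
    · exact Conn.refl _
    · exact h1
    · exact h2.trans (cut_conn h)
    · exact h3.trans (cut_conn h)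

lemma conn_var (hg : Good w e) {r : D} (hr : w r = r) (hd : w (e r) = e r) {x : D} :
    Conn w e r x ↔ x = r ∨ x = e r := by
  constructor
  · intro h
    refine (Conn.closed hg (P := fun x => x = r ∨ x = e r) ?_ ?_ h).1 (Or.inl rfl)
    · grind
    · have := hg.e2
      grind
  · rintro (rfl | rfl)
    · exact Conn.refl _
    · exact Conn.se _

lemma Reads.root {t : Term} {r : D} {ρ : ℕ → D} (h : Reads e t w r ρ) : w r = r := by
  cases t <;> exact h.1

lemma reads_congr {t : Term} : ∀ {w : D → D} {r : D} {ρ ρ' : ℕ → D},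
    (∀ x ∈ t.freeList, ρ x = ρ' x) → Reads e t w r ρ → Reads e t w r ρ' := by
  induction t with
  | var x =>
    intro w r ρ ρ' h hh
    simp only [Term.freeList, List.mem_singleton, forall_eq] at h
    simp only [Reads] at hh ⊢
    rw [← h]; exact hh
  | app t u iht ihu =>
    intro w r ρ ρ' h hh
    simp only [Term.freeList, List.mem_append] at h
    simp only [Reads] at hh ⊢
    exact ⟨hh.1, hh.2.1, iht (fun x hx => h x (Or.inl hx)) hh.2.2.1,
      ihu (fun x hx => h x (Or.inr hx)) hh.2.2.2.1, hh.2.2.2.2⟩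
  | lam z t ih =>
    intro w r ρ ρ' h hh
    simp only [Term.freeList, List.mem_filter] at h
    simp only [Reads] at hh ⊢
    refine ⟨hh.1, hh.2.1, ih (fun x hx => ?_) hh.2.2.1, hh.2.2.2⟩
    by_cases hz : x = z
    · subst hz; simp
    · simp [hz]; exact h x ⟨hx, by simpa using hz⟩

lemma free_sub_vars {t : Term} : ∀ x ∈ t.freeList, x ∈ t.varsList := by
  induction t with
  | var x => simp [Term.freeList, Term.varsList]
  | app t u iht ihu =>
    simp only [Term.freeList, Term.varsList, List.mem_append]
    intro x hx
    exact hx.imp (iht x) (ihu x)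
  | lam z t ih =>
    simp only [Term.freeList, Term.varsList, List.mem_filter, List.mem_cons]
    intro x hx
    exact Or.inr (ih x hx.1)

lemma reads_rename {t : Term} {x y : ℕ} : ∀ {w : D → D} {r : D} {ρ : ℕ → D}, y ∉ t.varsList →
    (Reads e (t.rename x y) w r ρ ↔ Reads e t w r (update ρ x (ρ y))) := by
  induction t with
  | var z =>
    intro w r ρ h
    by_cases hz : z = x
    · subst hz; simp [Term.rename, Reads]
    · simp [Term.rename, Reads, hz]
  | app t u iht ihu =>
    intro w r ρ h
    simp only [Term.varsList, List.mem_append, not_or] at h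
    simp only [Term.rename, Reads]
    rw [iht h.1, ihu h.2]
  | lam z t ih =>
    intro w r ρ h
    simp only [Term.varsList, List.mem_cons, not_or] at h
    by_cases hz : z = x
    · subst hz; simp [Term.rename, Reads]
    · simp only [Term.rename, Reads, hz, if_false]
      rw [ih h.2, update_comm hz, update_of_ne h.1]

lemma reads_step {t t' : Term} (h : BoundStep t t') : ∀ {w : D → D} {r : D} {ρ : ℕ → D},
    (Reads e t w r ρ ↔ Reads e t' w r ρ) := by
  induction h with
  | @here x y u hy =>
    intro w r ρ
    simp only [Reads]
    rw [reads_rename hy]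
    have : Reads e u (cut w (e r)) (w (e r)) (update ρ x (w (w (e r)))) ↔
        Reads e u (cut w (e r)) (w (e r)) (update (update ρ y (w (w (e r)))) x
          (update ρ y (w (w (e r))) y)) := by
      constructor
      · refine reads_congr (fun z hz => ?_)
        have : z ≠ y := fun h => hy (h ▸ free_sub_vars z hz)
        simp [update_apply, this]
      · refine reads_congr (fun z hz => ?_)
        have : z ≠ y := fun h => hy (h ▸ free_sub_vars z hz)
        simp [update_apply, this]
    rw [this]
  | appL _ ih => intro w r ρ; simp only [Reads]; rw [ih]
  | appR _ ih => intro w r ρ; simp only [Reads]; rw [ih]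
  | lam _ ih => intro w r ρ; simp only [Reads]; rw [ih]

/-- alpha equivalence of terms by bound steps -/
def TAlpha : Term → Term → Prop := Relation.EqvGen BoundStep

lemma reads_alpha {t t' : Term} (h : TAlpha t t') {w : D → D} {r : D} {ρ : ℕ → D} :
    Reads e t w r ρ ↔ Reads e t' w r ρ := by
  induction h with
  | rel x y h => exact reads_step h
  | refl x => rfl
  | symm x y _ ih => exact ih.symm
  | trans x y z _ _ i1 i2 => exact i1.trans i2

lemma reads_leaf {t : Term} : ∀ {w : D → D} {r : D} {ρ : ℕ → D}, Good w e → Reads e t w r ρ →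
    ∀ y, Conn w e r y → w y = y → y ≠ r → ∃ x ∈ t.freeList, ρ x = y := by
  induction t with
  | var x =>
    intro w r ρ hg h y hc hy hr
    simp only [Reads] at h
    rw [conn_var hg h.1 h.2.1] at hc
    refine ⟨x, by simp [Term.freeList], ?_⟩
    grind
  | app t u iht ihu =>
    intro w r ρ hg h y hc hy hr
    simp only [Reads] at h
    obtain ⟨h1, h2, h3, h4, h5⟩ := h
    have hd := root_distinct hg h1 h2
    have hi := @Good.inj _ _ _ hg
    have hcf := (cut_fix hg (e r) y).2 (Or.inl hy)
    rw [conn_iff hg h1] at hc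
    rcases hc with rfl | rfl | hc | hc
    · exact absurd rfl hr
    · exact absurd hy h2
    · obtain ⟨x, hx, hx'⟩ := iht (cut_good hg _) h3 y hc hcf (by grind)
      exact ⟨x, by simp [Term.freeList, hx], hx'⟩
    · obtain ⟨x, hx, hx'⟩ := ihu (cut_good hg _) h4 y hc hcf (by grind)
      exact ⟨x, by simp [Term.freeList, hx], hx'⟩
  | lam z t ih =>
    intro w r ρ hg h y hc hy hr
    simp only [Reads] at h
    obtain ⟨h1, h2, h3, h5⟩ := h
    have hd := root_distinct hg h1 h2
    have hi := @Good.inj _ _ _ hg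
    have hcf := (cut_fix hg (e r) y).2 (Or.inl hy)
    rw [conn_iff hg h1] at hc
    rcases hc with rfl | rfl | hc
    · exact absurd rfl hr
    · exact absurd hy h2
    · have hc : Conn (cut w (e r)) e (w (e r)) y := by
        rcases hc with h | h
        · exact h
        · exact h5.trans h
      obtain ⟨x, hx, hx'⟩ := ih (cut_good hg _) h3 y hc hcf (by grind)
      have hxz : x ≠ z := by
        rintro rfl
        simp at hx'
        grind
      refine ⟨x, ?_, by simpa [hxz] using hx'⟩
      simp [Term.freeList, hx, hxz]

end basic

/-! ## Uniqueness of the map -/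

section bisim
variable {D D' : Type} {w e : D → D} {w' e' : D' → D'}

/-- equivariant one-to-one relations -/
structure PB (w e : D → D) (w' e' : D' → D') (B : D → D' → Prop) : Prop where
  sw : ∀ x y, B x y → B (w x) (w' y)
  se : ∀ x y, B x y → B (e x) (e' y)
  fn : ∀ x y y', B x y → B x y' → y = y'
  inj : ∀ x x' y, B x y → B x' y → x = x'

lemma PB.join (hg : Good w e) (hg' : Good w' e') {r : D} {r' : D'} (hr : w r = r)
    (hr' : w' r' = r') {B : D → D' → Prop}
    (hB : PB (cut w (e r)) e (cut w' (e' r')) e' B)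
    (ha : B (w (e r)) (w' (e' r'))) (hb : B (w (w (e r))) (w' (w' (e' r'))))
    (hav : ∀ x y, B x y → x ≠ r ∧ x ≠ e r ∧ y ≠ r' ∧ y ≠ e' r') :
    PB w e w' e' (fun x y => B x y ∨ (x = r ∧ y = r') ∨ (x = e r ∧ y = e' r')) := by
  have hre := hg.ef r
  have hre' := hg'.ef r'
  refine ⟨?_, ?_, ?_, ?_⟩
  · rintro x y (h | ⟨rfl, rfl⟩ | ⟨rfl, rfl⟩)
    · by_cases h2 : x = w (e r)
      · subst h2
        have := hB.fn _ _ _ h ha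
        subst this
        exact Or.inl hb
      by_cases h3 : x = w (w (e r))
      · subst h3
        have := hB.fn _ _ _ h hb
        subst this
        rw [hg.w3, hg'.w3]
        exact Or.inr (Or.inr ⟨rfl, rfl⟩)
      have h2' : y ≠ w' (e' r') := by
        rintro rfl
        exact h2 (hB.inj _ _ _ h ha)
      have h3' : y ≠ w' (w' (e' r')) := by
        rintro rfl
        exact h3 (hB.inj _ _ _ h hb)
      have := hB.sw _ _ h
      rw [cut_of (hav _ _ h).2.1 h2 h3, cut_of (hav _ _ h).2.2.2 h2' h3'] at this
      exact Or.inl this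
    · rw [hr, hr']; exact Or.inr (Or.inl ⟨rfl, rfl⟩)
    · exact Or.inl ha
  · rintro x y (h | ⟨rfl, rfl⟩ | ⟨rfl, rfl⟩)
    · exact Or.inl (hB.se _ _ h)
    · exact Or.inr (Or.inr ⟨rfl, rfl⟩)
    · rw [hg.e2, hg'.e2]; exact Or.inr (Or.inl ⟨rfl, rfl⟩)
  · have := hB.fn
    grind
  · have := hB.inj
    grind

lemma cut_valid (hg : Good w e) {d x : D} (h : w x = x) : cut w d x = x :=
  (cut_fix hg _ _).2 (Or.inl h)

lemma lam_mem_free (hg : Good w e) {r : D} {ρ : ℕ → D} {z : ℕ} {t : Term}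
    (h : Reads e (.lam z t) w r ρ) (hv : ∀ x ∈ (Term.lam z t).freeList, w (ρ x) = ρ x) :
    z ∈ t.freeList := by
  simp only [Reads] at h
  obtain ⟨h1, h2, h3, h5⟩ := h
  have hd := root_distinct hg h1 h2
  have hi := @Good.inj _ _ _ hg
  obtain ⟨x, hx, hx'⟩ := reads_leaf (cut_good hg _) h3 (w (w (e r))) h5
    ((cut_fix hg _ _).2 (by simp)) (Ne.symm hd.2.2.2.2.2)
  by_cases hxz : x = z
  · exact hxz ▸ hx
  · rw [update_of_ne hxz] at hx'
    have := hv x (by simp [Term.freeList, hx, hxz])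
    grind

lemma lam_valid (hg : Good w e) {r : D} {ρ : ℕ → D} {z : ℕ} {t : Term}
    (hv : ∀ x ∈ (Term.lam z t).freeList, w (ρ x) = ρ x) :
    ∀ x ∈ t.freeList, cut w (e r) (update ρ z (w (w (e r))) x) =
      update ρ z (w (w (e r))) x := by
  intro x hx
  by_cases hxz : x = z
  · subst hxz
    simp only [update_self]
    exact (cut_fix hg _ _).2 (by simp)
  · rw [update_of_ne hxz]
    exact cut_valid hg (hv x (by simp [Term.freeList, hx, hxz]))

lemma bisim_exists {t : Term} : ∀ {w : D → D} {w' : D' → D'} {r : D} {r' : D'} {ρ : ℕ → D}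
    {ρ' : ℕ → D'}, Good w e → Good w' e' → Reads e t w r ρ → Reads e' t w' r' ρ' →
    (∀ x ∈ t.freeList, w (ρ x) = ρ x) → (∀ x ∈ t.freeList, w' (ρ' x) = ρ' x) →
    ∃ B : D → D' → Prop, PB w e w' e' B ∧ B r r' ∧ (∀ x ∈ t.freeList, B (ρ x) (ρ' x)) ∧
      ∀ x y, B x y → Conn w e r x ∧ Conn w' e' r' y := by
  induction t with
  | var z =>
    intro w w' r r' ρ ρ' hg hg' h h' hv hv'
    simp only [Reads] at h h'
    obtain ⟨h1, h2, h3⟩ := h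
    obtain ⟨h1', h2', h3'⟩ := h'
    have hre := hg.ef r
    have hre' := hg'.ef r'
    refine ⟨fun x y => (x = r ∧ y = r') ∨ (x = e r ∧ y = e' r'), ⟨?_, ?_, ?_, ?_⟩,
      Or.inl ⟨rfl, rfl⟩, ?_, ?_⟩
    · grind
    · have := hg.e2
      have := hg'.e2
      grind
    · grind
    · grind
    · simp [Term.freeList, h3, h3']
    · intro x y
      rw [conn_var hg h1 h2, conn_var hg' h1' h2']
      grind
  | app t u iht ihu =>
    intro w w' r r' ρ ρ' hg hg' h h' hv hv'
    simp only [Reads] at h h'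
    obtain ⟨h1, h2, h3, h4, h5⟩ := h
    obtain ⟨h1', h2', h3', h4', h5'⟩ := h'
    simp only [Term.freeList, List.mem_append] at hv hv'
    obtain ⟨B1, p1, q1, f1, c1⟩ := iht (cut_good hg _) (cut_good hg' _) h3 h3'
      (fun x hx => cut_valid hg (hv x (Or.inl hx)))
      (fun x hx => cut_valid hg' (hv' x (Or.inl hx)))
    obtain ⟨B2, p2, q2, f2, c2⟩ := ihu (cut_good hg _) (cut_good hg' _) h4 h4'
      (fun x hx => cut_valid hg (hv x (Or.inr hx)))
      (fun x hx => cut_valid hg' (hv' x (Or.inr hx)))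
    have hx : ∀ x y y', B1 x y → B2 x y' → False := fun x y y' k1 k2 =>
      h5 ((c1 _ _ k1).1.trans (c2 _ _ k2).1.symm)
    have hy : ∀ x x' y, B1 x y → B2 x' y → False := fun x x' y k1 k2 =>
      h5' ((c1 _ _ k1).2.trans (c2 _ _ k2).2.symm)
    have p : PB (cut w (e r)) e (cut w' (e' r')) e' (fun x y => B1 x y ∨ B2 x y) := by
      refine ⟨?_, ?_, ?_, ?_⟩
      · exact fun x y h => h.imp (p1.sw x y) (p2.sw x y)
      · exact fun x y h => h.imp (p1.se x y) (p2.se x y)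
      · have := p1.fn
        have := p2.fn
        grind
      · have := p1.inj
        have := p2.inj
        grind
    refine ⟨_, PB.join hg hg' h1 h1' p (Or.inl q1) (Or.inr q2) ?_, Or.inr (Or.inl ⟨rfl, rfl⟩),
      ?_, ?_⟩
    · rintro x y hB
      have hc : (Conn (cut w (e r)) e (w (e r)) x ∨ Conn (cut w (e r)) e (w (w (e r))) x) :=
        hB.imp (fun h => (c1 _ _ h).1) (fun h => (c2 _ _ h).1)
      have hc' := hB.imp (fun h => (c1 _ _ h).2) (fun h => (c2 _ _ h).2)
      have k1 := conn_avoid hg h1 h2 hc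
      have k2 := conn_avoid hg' h1' h2' hc'
      exact ⟨k1.1, k1.2, k2.1, k2.2⟩
    · simp only [Term.freeList, List.mem_append]
      intro x hx
      exact Or.inl (hx.imp (f1 x) (f2 x))
    · intro x y hB
      rw [conn_iff hg h1, conn_iff hg' h1']
      grind
  | lam z t ih =>
    intro w w' r r' ρ ρ' hg hg' h h' hv hv'
    have hz := lam_mem_free hg h hv
    simp only [Reads] at h h'
    obtain ⟨h1, h2, h3, h5⟩ := h
    obtain ⟨h1', h2', h3', h5'⟩ := h'
    obtain ⟨B1, p1, q1, f1, c1⟩ := ih (cut_good hg _) (cut_good hg' _) h3 h3'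
      (lam_valid hg hv) (lam_valid hg' hv')
    have hbz := f1 z hz
    simp only [update_self] at hbz
    refine ⟨_, PB.join hg hg' h1 h1' p1 q1 hbz ?_, Or.inr (Or.inl ⟨rfl, rfl⟩), ?_, ?_⟩
    · intro x y hB
      have k1 := conn_avoid hg h1 h2 (Or.inl (c1 _ _ hB).1)
      have k2 := conn_avoid hg' h1' h2' (Or.inl (c1 _ _ hB).2)
      exact ⟨k1.1, k1.2, k2.1, k2.2⟩
    · intro x hx
      simp only [Term.freeList, List.mem_filter, ne_eq, decide_not, Bool.not_eq_eq_eq_not,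
        Bool.not_true, decide_eq_false_iff_not] at hx
      have := f1 x hx.1
      rw [update_of_ne hx.2, update_of_ne hx.2] at this
      exact Or.inl this
    · intro x y hB
      rw [conn_iff hg h1, conn_iff hg' h1']
      grind

/-- transport along equivariant injections -/
lemma conn_transport (hg : Good w e) (hg' : Good w' e') {f : D → D'} (hf : Injective f)
    (hw : ∀ x, f (w x) = w' (f x)) (he : ∀ x, f (e x) = e' (f x)) {x y : D} :
    Conn w' e' (f x) (f y) ↔ Conn w e x y := by
  constructor
  · intro h
    have := (Conn.closed hg' (P := fun z => ∃ y, z = f y ∧ Conn w e x y) ?_ ?_ h).1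
      ⟨x, rfl, Conn.refl _⟩
    · obtain ⟨y', h1, h2⟩ := this
      rw [hf h1]; exact h2
    · rintro _ ⟨y, rfl, h⟩
      exact ⟨w y, (hw y).symm, h.trans (Conn.sw y)⟩
    · rintro _ ⟨y, rfl, h⟩
      exact ⟨e y, (he y).symm, h.trans (Conn.se y)⟩
  · intro h
    refine (Conn.closed hg (P := fun z => Conn w' e' (f x) (f z)) ?_ ?_ h).1 (Conn.refl _)
    · intro z hz
      rw [hw]; exact hz.trans (Conn.sw _)
    · intro z hz
      rw [he]; exact hz.trans (Conn.se _)

lemma cut_transport {f : D → D'} (hf : Injective f)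
    (hw : ∀ x, f (w x) = w' (f x)) (d x : D) : f (cut w d x) = cut w' (f d) (f x) := by
  unfold cut
  rw [← hw, ← hw, hf.eq_iff, hf.eq_iff, hf.eq_iff]
  split_ifs
  · rfl
  · exact hw x

lemma reads_transport {f : D → D'} (hf : Injective f) (he : ∀ x, f (e x) = e' (f x)) {t : Term} :
    ∀ {w : D → D} {w' : D' → D'} {r : D} {ρ : ℕ → D}, Good w e → Good w' e' →
    (∀ x, f (w x) = w' (f x)) →
    (Reads e' t w' (f r) (f ∘ ρ) ↔ Reads e t w r ρ) := by
  induction t with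
  | var x =>
    intro w w' r ρ hg hg' hw
    simp only [Reads, ← hw, ← he, hf.eq_iff, comp]
  | app t u iht ihu =>
    intro w w' r ρ hg hg' hw
    simp only [Reads, ← hw, ← he, hf.eq_iff, hf.ne_iff]
    rw [iht (cut_good hg _) (cut_good hg' _) (cut_transport hf hw _),
      ihu (cut_good hg _) (cut_good hg' _) (cut_transport hf hw _),
      conn_transport (cut_good hg _) (cut_good hg' _) hf (cut_transport hf hw _) he]
  | lam z t ih =>
    intro w w' r ρ hg hg' hw
    simp only [Reads, ← hw, ← he, hf.eq_iff, hf.ne_iff]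
    rw [← comp_update, ih (cut_good hg _) (cut_good hg' _) (cut_transport hf hw _),
      conn_transport (cut_good hg _) (cut_good hg' _) hf (cut_transport hf hw _) he]

end bisim

/-! ## Uniqueness of the term -/

lemma TAlpha.refl (t : Term) : TAlpha t t := Relation.EqvGen.refl t
lemma TAlpha.symm {t t' : Term} (h : TAlpha t t') : TAlpha t' t := Relation.EqvGen.symm _ _ h
lemma TAlpha.trans {t t' t'' : Term} (h : TAlpha t t') (h' : TAlpha t' t'') : TAlpha t t'' :=
  Relation.EqvGen.trans _ _ _ h h'

lemma TAlpha.map {f : Term → Term} (hf : ∀ t t', BoundStep t t' → BoundStep (f t) (f t'))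
    {t t' : Term} (h : TAlpha t t') : TAlpha (f t) (f t') := by
  induction h with
  | rel x y h => exact Relation.EqvGen.rel _ _ (hf _ _ h)
  | refl x => exact TAlpha.refl _
  | symm x y _ ih => exact ih.symm
  | trans x y z _ _ i1 i2 => exact i1.trans i2

lemma size_rename (x y : ℕ) (t : Term) : (t.rename x y).size = t.size := by
  induction t with
  | var z => simp only [Term.rename]; split_ifs <;> rfl
  | app t u iht ihu => simp [Term.rename, Term.size, iht, ihu]
  | lam z t ih => simp only [Term.rename]; split_ifs <;> simp [Term.size, ih]

lemma mem_free_rename {x y : ℕ} {t : Term} (hy : y ∉ t.varsList) {z : ℕ}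
    (hz : z ∈ (t.rename x y).freeList) : z = y ∨ (z ≠ x ∧ z ∈ t.freeList) := by
  induction t with
  | var a =>
    simp only [Term.rename] at hz
    split_ifs at hz <;> simp_all [Term.freeList]
  | app t u iht ihu =>
    simp only [Term.rename, Term.freeList, Term.varsList, List.mem_append, not_or] at *
    grind
  | lam a t ih =>
    simp only [Term.rename, Term.varsList, List.mem_cons, not_or] at *
    split_ifs at hz
    · simp [Term.freeList] at hz ⊢
      grind
    · simp [Term.freeList] at hz ⊢
      grind

lemma reads_unique {D : Type} {e : D → D} (n : ℕ) : ∀ {t t' : Term} {w : D → D} {r : D}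
    {ρ : ℕ → D}, t.size ≤ n → Good w e → Reads e t w r ρ → Reads e t' w r ρ →
    (∀ x ∈ t.freeList, w (ρ x) = ρ x) → (∀ x ∈ t'.freeList, w (ρ x) = ρ x) →
    (∀ x ∈ t.freeList, ∀ y ∈ t'.freeList, ρ x = ρ y → x = y) → TAlpha t t' := by
  induction n with
  | zero =>
    intro t t' w r ρ hn hg h h' hv hv' hi
    cases t with
    | var x =>
      cases t' with
      | var y =>
        simp only [Reads] at h h'
        have := hi x (by simp [Term.freeList]) y (by simp [Term.freeList])
          (h.2.2.trans h'.2.2.symm)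
        subst this
        exact TAlpha.refl _
      | app => exact absurd h.2.1 h'.2.1
      | lam => exact absurd h.2.1 h'.2.1
    | app => simp [Term.size] at hn
    | lam => simp [Term.size] at hn
  | succ n ih =>
    intro t t' w r ρ hn hg h h' hv hv' hi
    cases t with
    | var x =>
      cases t' with
      | var y =>
        simp only [Reads] at h h'
        have := hi x (by simp [Term.freeList]) y (by simp [Term.freeList])
          (h.2.2.trans h'.2.2.symm)
        subst this
        exact TAlpha.refl _
      | app => exact absurd h.2.1 h'.2.1
      | lam => exact absurd h.2.1 h'.2.1
    | app t u =>
      cases t' with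
      | var y => exact absurd h'.2.1 h.2.1
      | lam => exact absurd h'.2.2.2 h.2.2.2.2
      | app t' u' =>
        simp only [Reads] at h h'
        simp only [Term.size] at hn
        simp only [Term.freeList, List.mem_append] at hv hv' hi
        have a1 : TAlpha t t' := ih (by omega) (cut_good hg _) h.2.2.1 h'.2.2.1
          (fun x hx => cut_valid hg (hv x (Or.inl hx)))
          (fun x hx => cut_valid hg (hv' x (Or.inl hx)))
          (fun x hx y hy => hi x (Or.inl hx) y (Or.inl hy))
        have a2 : TAlpha u u' := ih (by omega) (cut_good hg _) h.2.2.2.1 h'.2.2.2.1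
          (fun x hx => cut_valid hg (hv x (Or.inr hx)))
          (fun x hx => cut_valid hg (hv' x (Or.inr hx)))
          (fun x hx y hy => hi x (Or.inr hx) y (Or.inr hy))
        exact (a1.map (f := fun t => .app t u) (fun _ _ h => .appL h)).trans
          (a2.map (f := fun u => .app t' u) (fun _ _ h => .appR h))
    | lam x t =>
      cases t' with
      | var y => exact absurd h'.2.1 h.2.1
      | app => exact absurd h.2.2.2 h'.2.2.2.2
      | lam y t' =>
        obtain ⟨z, hz⟩ := Infinite.exists_notMem_finset (t.varsList ++ t'.varsList).toFinset
        simp only [List.toFinset_append, Finset.mem_union, List.mem_toFinset, not_or] at hz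
        have s1 : TAlpha (.lam x t) (.lam z (t.rename x z)) :=
          Relation.EqvGen.rel _ _ (.here hz.1)
        have s2 : TAlpha (.lam y t') (.lam z (t'.rename y z)) :=
          Relation.EqvGen.rel _ _ (.here hz.2)
        have k := (reads_alpha s1).1 h
        have k' := (reads_alpha s2).1 h'
        have m : ∀ a, a ∈ (Term.lam z (t.rename x z)).freeList →
            a ∈ (Term.lam x t).freeList := by
          intro a ha
          simp only [Term.freeList, List.mem_filter, ne_eq, decide_not, Bool.not_eq_eq_eq_not,
            Bool.not_true, decide_eq_false_iff_not] at ha ⊢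
          have := mem_free_rename hz.1 ha.1
          grind
        have m' : ∀ a, a ∈ (Term.lam z (t'.rename y z)).freeList →
            a ∈ (Term.lam y t').freeList := by
          intro a ha
          simp only [Term.freeList, List.mem_filter, ne_eq, decide_not, Bool.not_eq_eq_eq_not,
            Bool.not_true, decide_eq_false_iff_not] at ha ⊢
          have := mem_free_rename hz.2 ha.1
          grind
        have hv1 := fun a ha => hv a (m a ha)
        have hv1' := fun a ha => hv' a (m' a ha)
        have hdist := root_distinct hg k.1 k.2.1
        have hwi := @Good.inj _ _ _ hg
        have nb : w (w (w (e r))) ≠ w (w (e r)) := by grind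
        have a1 : TAlpha (t.rename x z) (t'.rename y z) := by
          refine ih ?_ (cut_good hg _) k.2.2.1 k'.2.2.1 (lam_valid hg hv1) (lam_valid hg hv1') ?_
          · rw [size_rename]; simpa [Term.size] using hn
          · intro a ha c hc hac
            by_cases ea : a = z
            · by_cases ec : c = z
              · rw [ea, ec]
              · exfalso
                have := hv1' c (by simp [Term.freeList, hc, ec])
                subst ea
                rw [update_self, update_of_ne ec] at hac
                rw [← hac] at this
                exact nb this
            · have va := hv1 a (by simp [Term.freeList, ha, ea])
              by_cases ec : c = z
              · exfalso
                subst ec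
                rw [update_self, update_of_ne ea] at hac
                rw [hac] at va
                exact nb va
              · rw [update_of_ne ea, update_of_ne ec] at hac
                exact hi a (m a (by simp [Term.freeList, ha, ea])) c
                  (m' c (by simp [Term.freeList, hc, ec])) hac
        exact s1.trans ((a1.map (f := fun u => .lam z u) (fun _ _ h => .lam h)).trans s2.symm)

/-! ## Linear terms -/

lemma linear_nodup {Γ : List ℕ} {t : Term} (h : Linear Γ t) : Γ.Nodup := by
  induction h with
  | var x => simp
  | app _ _ h _ _ => exact h
  | lam _ ih => exact (List.nodup_append.1 ih).1
  | @exch Γ Δ x y t _ ih =>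
    exact (List.Perm.nodup_iff (List.Perm.append_left Γ (List.Perm.swap x y Δ))).1 ih

lemma linear_perm_aux {Γ Γ' : List ℕ} {t : Term} (h : Γ.Perm Γ') :
    ∀ Δ : List ℕ, Linear (Δ ++ Γ) t → Linear (Δ ++ Γ') t := by
  induction h with
  | nil => exact fun _ h => h
  | cons x _ ih =>
    intro Δ h
    have := ih (Δ ++ [x]) (by simpa using h)
    simpa using this
  | swap x y l => exact fun Δ h => Linear.exch h
  | trans _ _ i1 i2 => exact fun Δ h => i2 Δ (i1 Δ h)

lemma linear_perm {Γ Γ' : List ℕ} {t : Term} (h : Γ.Perm Γ') (hl : Linear Γ t) : Linear Γ' t :=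
  linear_perm_aux h [] hl

lemma linear_free {Γ : List ℕ} {t : Term} (h : Linear Γ t) : ∀ x ∈ t.freeList, x ∈ Γ := by
  induction h with
  | var x => simp [Term.freeList]
  | app _ _ _ i1 i2 =>
    intro x hx
    simp only [Term.freeList, List.mem_append] at hx ⊢
    exact hx.imp (i1 x) (i2 x)
  | lam _ ih =>
    intro x hx
    simp only [Term.freeList, List.mem_filter, ne_eq, decide_not, Bool.not_eq_eq_eq_not,
      Bool.not_true, decide_eq_false_iff_not] at hx
    have := ih x hx.1
    simp at this
    tauto
  | exch _ ih =>
    intro x hx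
    have := ih x hx
    simp at this ⊢
    tauto

/-! ## Existence of the term -/

lemma term_exists {D : Type} [Finite D] {e : D → D} {N : D → ℕ} {ρ : ℕ → D}
    (hN : ∀ x, ρ (N x) = x) (k : ℕ) : ∀ (w : D → D) (r : D), Set.ncard {x | w x ≠ x} = k →
    Good w e → w r = r → ∃ (t : Term) (Γ : List ℕ), Reads e t w r ρ ∧ Linear Γ t ∧
      (∀ z, z ∈ Γ ↔ ∃ y, Conn w e r y ∧ w y = y ∧ y ≠ r ∧ N y = z) ∧
      Set.ncard {x | Conn w e r x} = 3 * t.size + 1 + Γ.length := by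
  have Ninj : ∀ {x y}, N x = N y → x = y := fun {x y} h => by rw [← hN x, h, hN]
  induction k using Nat.strong_induction_on with
  | _ k ih =>
  intro w r hk hg hr
  have hre := hg.ef r
  by_cases hd : w (e r) = e r
  · refine ⟨.var (N (e r)), [N (e r)], ⟨hr, hd, hN _⟩, .var _, ?_, ?_⟩
    · intro z
      simp only [List.mem_singleton, conn_var hg hr hd]
      grind
    · simp only [conn_var hg hr hd]
      have : {x | x = r ∨ x = e r} = ({r, e r} : Set D) := by ext; simp
      rw [this, Set.ncard_pair (Ne.symm hre)]
      simp [Term.size]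
  have hlt : Set.ncard {x | cut w (e r) x ≠ x} < k := by
    rw [← hk]
    apply Set.ncard_lt_ncard _ (Set.toFinite _)
    refine ⟨fun x hx hx' => hx (cut_valid hg hx'), fun h => ?_⟩
    exact (h (show e r ∈ {x | w x ≠ x} from hd)) ((cut_fix hg _ _).2 (by simp))
  have hdist := root_distinct hg hr hd
  have hwi := @Good.inj _ _ _ hg
  have fa : cut w (e r) (w (e r)) = w (e r) := (cut_fix hg _ _).2 (by simp)
  have fb : cut w (e r) (w (w (e r))) = w (w (e r)) := (cut_fix hg _ _).2 (by simp)
  have na : w (w (e r)) ≠ w (e r) := by grind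
  have nb : w (w (w (e r))) ≠ w (w (e r)) := by grind
  obtain ⟨t, Γ, h1, h2, h3, h4⟩ := ih _ hlt (cut w (e r)) (w (e r)) rfl (cut_good hg _) fa
  by_cases hc : Conn (cut w (e r)) e (w (e r)) (w (w (e r)))
  · have hcomp : ∀ x, Conn w e r x ↔ x = r ∨ x = e r ∨ Conn (cut w (e r)) e (w (e r)) x := by
      intro x
      rw [conn_iff hg hr]
      have : Conn (cut w (e r)) e (w (w (e r))) x → Conn (cut w (e r)) e (w (e r)) x :=
        fun h => hc.trans h
      tauto
    have hav := fun x h => conn_avoid hg hr hd (x := x) (Or.inl h)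
    have hmem : N (w (w (e r))) ∈ Γ := (h3 _).2 ⟨_, hc, fb, na, rfl⟩
    have hnd := linear_nodup h2
    refine ⟨.lam (N (w (w (e r)))) t, Γ.erase (N (w (w (e r)))), ⟨hr, hd, ?_, hc⟩, ?_, ?_, ?_⟩
    · have : update ρ (N (w (w (e r)))) (w (w (e r))) = ρ := by
        conv_lhs => rw [← hN (w (w (e r))), hN (w (w (e r)))]
        rw [update_eq_iff]
        exact ⟨(hN _).symm, fun _ _ => rfl⟩
      rw [this]; exact h1
    · apply Linear.lam
      apply linear_perm _ h2
      exact (List.perm_cons_erase hmem).trans (List.perm_append_singleton _ _).symm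
    · intro z
      rw [hnd.mem_erase_iff, h3]
      constructor
      · rintro ⟨hz, y, k1, k2, k3, k4⟩
        rw [cut_fix hg] at k2
        have := hav y k1
        refine ⟨y, (hcomp y).2 (Or.inr (Or.inr k1)), ?_, this.1, k4⟩
        grind
      · rintro ⟨y, k1, k2, k3, k4⟩
        have k5 : y ≠ w (w (e r)) := by grind
        have k6 : y ≠ w (e r) := by grind
        have k7 : y ≠ e r := by grind
        refine ⟨fun h => k5 (Ninj (k4.trans h)), y, ?_, cut_valid hg k2, k6, k4⟩
        have := (hcomp y).1 k1
        tauto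
    · have : {x | Conn w e r x} = insert r (insert (e r)
          {x | Conn (cut w (e r)) e (w (e r)) x}) := by
        ext x; simp [hcomp]
      rw [this, Set.ncard_insert_of_notMem, Set.ncard_insert_of_notMem, h4,
        List.length_erase_of_mem hmem]
      · have := List.length_pos_of_mem hmem
        simp only [Term.size]
        omega
      · exact fun h => (hav _ h).2 rfl
      · rintro (h | h)
        · exact hre h.symm
        · exact (hav _ h).1 rfl
  · obtain ⟨u, Δ, g1, g2, g3, g4⟩ := ih _ hlt (cut w (e r)) (w (w (e r))) rfl (cut_good hg _) fb
    have hav := fun x h => conn_avoid hg hr hd (x := x) h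
    have hdis : ∀ x, Conn (cut w (e r)) e (w (e r)) x → Conn (cut w (e r)) e (w (w (e r))) x →
      False := fun x k1 k2 => hc (k1.trans k2.symm)
    refine ⟨.app t u, Γ ++ Δ, ⟨hr, hd, h1, g1, hc⟩, Linear.app h2 g2 ?_, ?_, ?_⟩
    · rw [List.nodup_append]
      refine ⟨linear_nodup h2, linear_nodup g2, ?_⟩
      intro a ha b hb hab
      obtain ⟨y, k1, k2, k3, k4⟩ := (h3 _).1 ha
      obtain ⟨y', l1, l2, l3, l4⟩ := (g3 _).1 hb
      have : y = y' := Ninj (k4.trans (hab.trans l4.symm))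
      subst this
      exact hdis _ k1 l1
    · intro z
      rw [List.mem_append, h3, g3]
      constructor
      · rintro (⟨y, k1, k2, k3, k4⟩ | ⟨y, k1, k2, k3, k4⟩)
        · have k5 := hav y (Or.inl k1)
          refine ⟨y, (conn_iff hg hr).2 (Or.inr (Or.inr (Or.inl k1))), ?_, k5.1, k4⟩
          rw [cut_fix hg] at k2
          have : y ≠ w (w (e r)) := by
            rintro rfl; exact hc k1
          grind
        · have k5 := hav y (Or.inr k1)
          refine ⟨y, (conn_iff hg hr).2 (Or.inr (Or.inr (Or.inr k1))), ?_, k5.1, k4⟩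
          rw [cut_fix hg] at k2
          have : y ≠ w (e r) := by
            rintro rfl; exact hc k1.symm
          grind
      · rintro ⟨y, k1, k2, k3, k4⟩
        have k5 : y ≠ w (w (e r)) := by grind
        have k6 : y ≠ w (e r) := by grind
        have k7 : y ≠ e r := by grind
        rcases (conn_iff hg hr).1 k1 with h | h | h | h
        · exact absurd h k3
        · exact absurd h k7
        · exact Or.inl ⟨y, h, cut_valid hg k2, k6, k4⟩
        · exact Or.inr ⟨y, h, cut_valid hg k2, k5, k4⟩
    · have : {x | Conn w e r x} = insert r (insert (e r)
          ({x | Conn (cut w (e r)) e (w (e r)) x} ∪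
            {x | Conn (cut w (e r)) e (w (w (e r))) x})) := by
        ext x; simp [conn_iff hg hr]
      rw [this, Set.ncard_insert_of_notMem, Set.ncard_insert_of_notMem, Set.ncard_union_eq, h4, g4]
      · simp only [Term.size, List.length_append]
        omega
      · rw [Set.disjoint_left]
        exact hdis
      · exact fun h => (hav _ h).2 rfl
      · rintro (h | h)
        · exact hre h.symm
        · exact (hav _ h).1 rfl

/-! ## Existence of the map -/

open Classical in
/-- vertex permutation after adding a vertex joining the leaves `a`, `b` -/
noncomputable def jw {D : Type} (w : D → D) (a b : D) : D ⊕ Bool → D ⊕ Bool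
  | .inl x => if x = a then .inl b else if x = b then .inr true else .inl (w x)
  | .inr true => .inl a
  | .inr false => .inr false

/-- edge involution after adding a vertex -/
def je {D : Type} (e : D → D) : D ⊕ Bool → D ⊕ Bool
  | .inl x => .inl (e x)
  | .inr c => .inr (!c)

lemma join_good {D : Type} {w e : D → D} (hg : Good w e) {a b : D} (ha : w a = a) (hb : w b = b)
    (hab : a ≠ b) : Good (jw w a b) (je e) := by
  have h3 := hg.w3
  have hi := @Good.inj _ _ _ hg
  refine ⟨?_, ?_, ?_⟩
  · rintro (x | _ | _)
    · simp only [jw]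
      by_cases h1 : x = a
      · subst h1; simp [jw, hab.symm]
      by_cases h2 : x = b
      · subst h2; simp [jw, hab.symm]
      have k1 : w x ≠ a := by grind
      have k2 : w x ≠ b := by grind
      have k3 : w (w x) ≠ a := by grind
      have k4 : w (w x) ≠ b := by grind
      simp [jw, h1, h2, k1, k2, k3, k4, h3]
    · simp [jw]
    · simp [jw, hab.symm]
  · rintro (x | _ | _) <;> simp [je, hg.e2]
  · rintro (x | _ | _) <;> simp [je, hg.ef]

lemma join_cut {D : Type} {w : D → D} {a b : D} (ha : w a = a) (hb : w b = b)
    (hab : a ≠ b) (x : D) :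
    (Sum.inl (w x) : D ⊕ Bool) = cut (jw w a b) (.inr true) (.inl x) := by
  unfold cut
  by_cases h1 : x = a
  · subst h1; simp [jw, ha]
  by_cases h2 : x = b
  · subst h2; simp [jw, hb]
  simp [jw, h1, h2]

/-- existence of a map with a given reading -/
def Realizable (Γ : List ℕ) (t : Term) : Prop :=
  ∃ (D : Type) (_ : Finite D) (w e : D → D) (r : D) (ρ : ℕ → D), Good w e ∧
    Reads e t w r ρ ∧ (∀ x ∈ Γ, w (ρ x) = ρ x ∧ ρ x ≠ r) ∧
    (∀ x ∈ Γ, ∀ y ∈ Γ, ρ x = ρ y → x = y) ∧ (∀ x, Conn w e r x) ∧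
    Nat.card D = 3 * t.size + 1 + Γ.length

/-- join of two `Γ₃`-sets -/
lemma sum_good {D D' : Type} {w e : D → D} {w' e' : D' → D'} (hg : Good w e) (hg' : Good w' e') :
    Good (Sum.map w w') (Sum.map e e') := by
  refine ⟨?_, ?_, ?_⟩
  · rintro (x | x) <;> simp [hg.w3, hg'.w3]
  · rintro (x | x) <;> simp [hg.e2, hg'.e2]
  · rintro (x | x) <;> simp [hg.ef, hg'.ef]

lemma map_exists {Γ : List ℕ} {t : Term} (h : Linear Γ t) : Realizable Γ t := by
  induction h with
  | var x =>
    refine ⟨Bool, inferInstance, id, Bool.not, false, fun _ => true, ⟨?_, ?_, ?_⟩,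
      ?_, ?_, ?_, ?_, ?_⟩
    · simp
    · simp
    · simp
    · simp [Reads]
    · simp
    · simp
    · rintro (_ | _)
      · exact Conn.refl _
      · exact Conn.se _
    · simp [Term.size]
  | @exch Γ Δ x y t _ ih =>
    obtain ⟨D, hf, w, e, r, ρ, h1, h2, h3, h4, h5, h6⟩ := ih
    have hm : ∀ z, z ∈ Γ ++ x :: y :: Δ ↔ z ∈ Γ ++ y :: x :: Δ := by
      intro z; simp only [List.mem_append, List.mem_cons]; tauto
    refine ⟨D, hf, w, e, r, ρ, h1, h2, fun z hz => h3 z ((hm z).1 hz),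
      fun z hz z' hz' => h4 z ((hm z).1 hz) z' ((hm z').1 hz'), h5, ?_⟩
    rw [h6]; simp
  | @lam Γ x t hl ih =>
    obtain ⟨D, hf, w, e, r, ρ, h1, h2, h3, h4, h5, h6⟩ := ih
    have hnd := linear_nodup hl
    have hx : x ∈ Γ ++ [x] := by simp
    have hr := h2.root
    have hb := h3 x hx
    have hab : r ≠ ρ x := Ne.symm hb.2
    have hG := join_good h1 hr hb.1 hab
    have e0 : je e (.inr false) = .inr true := rfl
    have w1 : jw w r (ρ x) (.inr true) = .inl r := rfl
    have w2 : jw w r (ρ x) (.inl r) = .inl (ρ x) := by simp [jw]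
    have hcw := join_cut (w := w) hr hb.1 hab
    have hC : ∀ y, Conn (cut (jw w r (ρ x)) (.inr true)) (je e) (.inl r) (.inl y) := fun y =>
      (conn_transport h1 (cut_good hG _) Sum.inl_injective hcw (fun _ => rfl)).2 (h5 y)
    have r0 : jw w r (ρ x) (.inr false) = .inr false := rfl
    refine ⟨D ⊕ Bool, inferInstance, jw w r (ρ x), je e, .inr false, Sum.inl ∘ ρ, hG,
      ?_, ?_, ?_, ?_, ?_⟩
    · simp only [Reads, e0, w1, w2]
      refine ⟨rfl, by simp, ?_, hC _⟩
      rw [← comp_update, update_eq_self]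
      exact (reads_transport Sum.inl_injective (fun _ => rfl) h1 (cut_good hG _) hcw).2 h2
    · intro y hy
      have hy' := h3 y (by simp [hy])
      have hyx : ρ y ≠ ρ x := by
        intro h
        have := h4 y (by simp [hy]) x hx h
        subst this
        simp [List.nodup_append] at hnd
        exact hnd.2 _ hy rfl
      simp [jw, hy', hyx]
    · intro y hy z hz h
      exact h4 y (by simp [hy]) z (by simp [hz]) (Sum.inl_injective h)
    · intro y
      rw [conn_iff hG rfl]
      rcases y with y | _ | _
      · right; right; left
        exact hC y
      · left; rfl
      · right; left; rfl
    · simp [Term.size, h6, Nat.card_sum]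
      omega
  | @app Γ Δ t u hl1 hl2 hnd i1 i2 =>
    obtain ⟨D, hf, w, e, r, ρ, h1, h2, h3, h4, h5, h6⟩ := i1
    obtain ⟨D', hf', w', e', r', ρ', h1', h2', h3', h4', h5', h6'⟩ := i2
    have hS := sum_good h1 h1'
    have hr := h2.root
    have hr' := h2'.root
    have sr : Sum.map w w' (.inl r) = .inl r := by simp [hr]
    have sr' : Sum.map w w' (.inr r') = .inr r' := by simp [hr']
    have hab : (Sum.inl r : D ⊕ D') ≠ .inr r' := by simp
    have hG := join_good hS sr sr' hab
    set W := jw (Sum.map w w') (.inl r) (.inr r') with hW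
    set E := je (Sum.map e e') with hE
    have e0 : E (.inr false) = .inr true := rfl
    have w1 : W (.inr true) = .inl (.inl r) := rfl
    have w2 : W (.inl (.inl r)) = .inl (.inr r') := by simp [hW, jw]
    have hcw := join_cut sr sr' hab
    have hc1 : ∀ x, Sum.inl (Sum.inl (w x)) = cut W (.inr true) (.inl (.inl x)) :=
      fun x => hcw (.inl x)
    have hc2 : ∀ x, Sum.inl (Sum.inr (w' x)) = cut W (.inr true) (.inl (.inr x)) :=
      fun x => hcw (.inr x)
    have j1 : Injective (fun x : D => (Sum.inl (Sum.inl x) : (D ⊕ D') ⊕ Bool)) :=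
      fun x y h => by simpa using h
    have j2 : Injective (fun x : D' => (Sum.inl (Sum.inr x) : (D ⊕ D') ⊕ Bool)) :=
      fun x y h => by simpa using h
    have hC1 : ∀ y, Conn (cut W (.inr true)) E (.inl (.inl r)) (.inl (.inl y)) := fun y =>
      (conn_transport h1 (cut_good hG _) j1 hc1 (fun _ => rfl)).2 (h5 y)
    have hC2 : ∀ y, Conn (cut W (.inr true)) E (.inl (.inr r')) (.inl (.inr y)) := fun y =>
      (conn_transport h1' (cut_good hG _) j2 hc2 (fun _ => rfl)).2 (h5' y)
    have hn : ¬ Conn (cut W (.inr true)) E (.inl (.inl r)) (.inl (.inr r')) := by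
      intro h
      have := (conn_transport hS (cut_good hG _) Sum.inl_injective hcw (fun _ => rfl)).1 h
      have := (Conn.closed hS (P := fun x => x.isLeft = true) ?_ ?_ this).1 rfl
      · simp at this
      · rintro (x | x) <;> simp
      · rintro (x | x) <;> simp
    rw [List.nodup_append] at hnd
    refine ⟨(D ⊕ D') ⊕ Bool, inferInstance, W, E, .inr false,
      fun x => if x ∈ Γ then .inl (.inl (ρ x)) else .inl (.inr (ρ' x)), hG, ?_, ?_, ?_, ?_, ?_⟩
    · simp only [Reads, e0, w1, w2]
      refine ⟨rfl, by simp, ?_, ?_, hn⟩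
      · have := (reads_transport j1 (fun _ => rfl) h1 (cut_good hG _) hc1).2 h2
        refine reads_congr (fun x hx => ?_) this
        simp [linear_free hl1 x hx]
      · have := (reads_transport j2 (fun _ => rfl) h1' (cut_good hG _) hc2).2 h2'
        refine reads_congr (fun x hx => ?_) this
        have hx2 := linear_free hl2 x hx
        have : x ∉ Γ := fun h => hnd.2.2 x h x hx2 rfl
        simp [this]
    · intro x hx
      by_cases hx1 : x ∈ Γ
      · simp [hx1, hW, jw, h3 x hx1]
      · have hx2 : x ∈ Δ := by simpa [hx1] using hx
        simp [hx1, hW, jw, h3' x hx2]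
    · intro x hx y hy hxy
      by_cases hx1 : x ∈ Γ
      · by_cases hy1 : y ∈ Γ
        · simp [hx1, hy1] at hxy
          exact h4 x hx1 y hy1 hxy
        · simp [hx1, hy1] at hxy
      · by_cases hy1 : y ∈ Γ
        · simp [hx1, hy1] at hxy
        · simp [hx1, hy1] at hxy
          exact h4' x (by simpa [hx1] using hx) y (by simpa [hy1] using hy) hxy
    · intro y
      rw [conn_iff hG rfl, e0, w1, w2]
      rcases y with (y | y) | _ | _
      · right; right; left
        exact hC1 y
      · right; right; right
        exact hC2 y
      · left; rfl
      · right; left; rfl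
    · simp [Term.size, h6, h6', Nat.card_sum]
      omega

/-! ## Classical maps -/

/-- the four extra darts -/
inductive Four : Type
  | r | d | a | b
deriving DecidableEq

instance : Fintype Four := ⟨{.r, .d, .a, .b}, by rintro (_ | _ | _ | _) <;> simp⟩

/-- vertices of the map extended by a root leaf -/
def xw {M : Type} (v : M → M) : M ⊕ Four → M ⊕ Four
  | .inl x => .inl (v x)
  | .inr .r => .inr .r
  | .inr .d => .inr .a
  | .inr .a => .inr .b
  | .inr .b => .inr .d

open Classical in
/-- edges of the map extended by a root leaf attached to the root edge -/
noncomputable def xe {M : Type} (e : M → M) (o : M) : M ⊕ Four → M ⊕ Four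
  | .inl x => if x = o then .inr .a else if x = e o then .inr .b else .inl (e x)
  | .inr .r => .inr .d
  | .inr .d => .inr .r
  | .inr .a => .inl o
  | .inr .b => .inl (e o)

section ext
variable {M : Type} {v e : M → M} {o : M}

lemma ext_good (hv : ∀ x, v (v (v x)) = x) (he : ∀ x, e (e x) = x) (hf : ∀ x, e x ≠ x) :
    Good (xw v) (xe e o) := by
  refine ⟨?_, ?_, ?_⟩
  · rintro (x | _ | _ | _ | _) <;> simp [xw, hv]
  · rintro (x | _ | _ | _ | _)
    · by_cases h1 : x = o
      · subst h1; simp [xe]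
      by_cases h2 : x = e o
      · subst h2; simp [xe, hf]
      have h3 : e x ≠ o := fun h => h2 (by rw [← h, he])
      have h4 : e x ≠ e o := fun h => h1 (by rw [← he x, h, he])
      simp [xe, h1, h2, h3, h4, he]
    · simp [xe]
    · simp [xe]
    · simp [xe]
    · simp [xe, hf]
  · rintro (x | _ | _ | _ | _)
    · simp only [xe]
      split_ifs <;> simp [hf]
    · simp [xe]
    · simp [xe]
    · simp [xe]
    · simp [xe]

lemma ext_conn (hv : ∀ x, v (v (v x)) = x) (he : ∀ x, e (e x) = x) (hf : ∀ x, e x ≠ x)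
    (ht : ∀ x y, Relation.EqvGen (fun a b => v a = b ∨ e a = b) x y) (x : M ⊕ Four) :
    Conn (xw v) (xe e o) (.inr .r) x := by
  have hG := ext_good (o := o) hv he hf
  have c1 : Conn (xw v) (xe e o) (.inr .r) (.inr .d) := Conn.se _
  have c2 : Conn (xw v) (xe e o) (.inr .r) (.inr .a) := c1.trans (Conn.sw _)
  have c3 : Conn (xw v) (xe e o) (.inr .r) (.inr .b) := c2.trans (Conn.sw _)
  have c4 : Conn (xw v) (xe e o) (.inr .r) (.inl o) := c2.trans (Conn.se _)
  have c5 : Conn (xw v) (xe e o) (.inr .r) (.inl (e o)) := c3.trans (Conn.se _)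
  rcases x with x | _ | _ | _ | _
  · have := (Conn.closed (w := v) (e := e) ⟨hv, he, hf⟩
      (P := fun x => Conn (xw v) (xe e o) (.inr .r) (.inl x)) ?_ ?_ (ht o x)).1 c4
    · exact this
    · intro x hx
      exact hx.trans (Conn.sw _)
    · intro x hx
      by_cases h1 : x = o
      · subst h1; exact c5
      by_cases h2 : x = e o
      · subst h2; rw [he]; exact c4
      have := hx.trans (Conn.se _)
      simpa [xe, h1, h2] using this
  · exact Conn.refl _
  · exact c1
  · exact c2
  · exact c3

end ext

/-- a term is read off a classical map -/
def CReads (M : CMap) (t : Term) : Prop :=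
  ∃ ρ, Reads (xe M.e M.root) t (xw M.v) (.inr .r) ρ

lemma _root_.IsCMap.good {M : CMap} (h : IsCMap M) : Good (xw M.v) (xe M.e M.root) :=
  ext_good h.v_cube h.e_sq h.e_free

lemma creads_exists {M : CMap} (h : IsCMap M) {m : ℕ} (hm : 0 < m)
    (hc : Nat.card M.carrier = 3 * m) :
    ∃ t, Linear [] t ∧ t.size = m + 1 ∧ CReads M t := by
  have hfin : Finite M.carrier := Nat.finite_of_card_ne_zero (by omega)
  obtain ⟨N, hN⟩ := Countable.exists_injective_nat (M.carrier ⊕ Four)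
  have : Nonempty (M.carrier ⊕ Four) := ⟨.inr .r⟩
  obtain ⟨t, Γ, h1, h2, h3, h4⟩ := term_exists (e := xe M.e M.root) (N := N) (ρ := invFun N)
    (leftInverse_invFun hN) _ (xw M.v) (.inr .r) rfl h.good rfl
  have hΓ : Γ = [] := by
    rw [List.eq_nil_iff_forall_not_mem]
    intro z hz
    obtain ⟨y, -, k2, k3, -⟩ := (h3 z).1 hz
    rcases y with y | _ | _ | _ | _
    · simp [xw, h.v_free] at k2
    all_goals simp [xw] at k2 k3
  subst hΓ
  refine ⟨t, h2, ?_, _, h1⟩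
  have : {x | Conn (xw M.v) (xe M.e M.root) (.inr .r) x} = Set.univ :=
    Set.eq_univ_of_forall (ext_conn h.v_cube h.e_sq h.e_free h.trans)
  rw [this, Set.ncard_univ, Nat.card_sum, hc] at h4
  have h44 : Nat.card Four = 4 := by rw [Nat.card_eq_fintype_card]; rfl
  simp only [h44, List.length_nil] at h4
  omega

lemma creads_unique {M : CMap} (h : IsCMap M) {t t' : Term} (hl : Linear [] t)
    (hl' : Linear [] t') (hr : CReads M t) (hr' : CReads M t') : TAlpha t t' := by
  obtain ⟨ρ, hr⟩ := hr
  obtain ⟨ρ', hr'⟩ := hr'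
  have f : ∀ x ∈ t.freeList, False := fun x hx => by simpa using linear_free hl x hx
  have f' : ∀ x ∈ t'.freeList, False := fun x hx => by simpa using linear_free hl' x hx
  have hr2 := reads_congr (ρ' := ρ) (fun x hx => (f' x hx).elim) hr'
  exact reads_unique t.size le_rfl h.good hr hr2 (fun x hx => (f x hx).elim)
    (fun x hx => (f' x hx).elim) (fun x hx => (f x hx).elim)

lemma creads_iso {M M' : CMap} (h : IsCMap M) (h' : IsCMap M') (hi : CIso M M') {t : Term}
    (hr : CReads M t) : CReads M' t := by
  obtain ⟨ρ, hr⟩ := hr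
  obtain ⟨f, fv, fe, fr⟩ := hi
  refine ⟨Sum.map f id ∘ ρ, ?_⟩
  refine (reads_transport (f := Sum.map f id) (r := .inr Four.r)
    (Sum.map_injective.2 ⟨f.injective, injective_id⟩) ?_ h.good h'.good ?_).2 hr
  · rintro (x | _ | _ | _ | _)
    · simp only [xe, Sum.map_inl]
      rw [← fr, ← fe, f.injective.eq_iff, f.injective.eq_iff, ← fe]
      split_ifs <;> simp
    all_goals simp [xe, fr, fe]
  · rintro (x | _ | _ | _ | _) <;> simp [xw, fv]

lemma creads_inj {M M' : CMap} (h : IsCMap M) (h' : IsCMap M') {t : Term} (hl : Linear [] t)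
    (hr : CReads M t) (hr' : CReads M' t) : CIso M M' := by
  obtain ⟨ρ, hr⟩ := hr
  obtain ⟨ρ', hr'⟩ := hr'
  have f : ∀ x ∈ t.freeList, False := fun x hx => by simpa using linear_free hl x hx
  obtain ⟨B, hB, h0, -, -⟩ := bisim_exists h.good h'.good hr hr' (fun x hx => (f x hx).elim)
    (fun x hx => (f x hx).elim)
  have bd : B (.inr .d) (.inr .d) := hB.se _ _ h0
  have ba : B (.inr .a) (.inr .a) := hB.sw _ _ bd
  have bb : B (.inr .b) (.inr .b) := hB.sw _ _ ba
  have bo : B (.inl M.root) (.inl M'.root) := hB.se _ _ ba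
  have bo' : B (.inl (M.e M.root)) (.inl (M'.e M'.root)) := hB.se _ _ bb
  have bk : ∀ k : Four, B (.inr k) (.inr k) := by
    rintro (_ | _ | _ | _) <;> assumption
  have tot : ∀ x, ∃ y, B x y := by
    intro x
    refine (Conn.closed h.good (P := fun x => ∃ y, B x y) ?_ ?_
      (ext_conn h.v_cube h.e_sq h.e_free h.trans x)).1 ⟨_, h0⟩
    · rintro x ⟨y, hy⟩; exact ⟨_, hB.sw _ _ hy⟩
    · rintro x ⟨y, hy⟩; exact ⟨_, hB.se _ _ hy⟩
  have tot' : ∀ y, ∃ x, B x y := by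
    intro x
    refine (Conn.closed h'.good (P := fun y => ∃ x, B x y) ?_ ?_
      (ext_conn h'.v_cube h'.e_sq h'.e_free h'.trans x)).1 ⟨_, h0⟩
    · rintro x ⟨y, hy⟩; exact ⟨_, hB.sw _ _ hy⟩
    · rintro x ⟨y, hy⟩; exact ⟨_, hB.se _ _ hy⟩
  have t1 : ∀ x : M.carrier, ∃ y : M'.carrier, B (.inl x) (.inl y) := by
    intro x
    obtain ⟨y | k, hy⟩ := tot (.inl x)
    · exact ⟨y, hy⟩
    · exact absurd (hB.inj _ _ _ hy (bk k)) (by simp)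
  have t2 : ∀ y : M'.carrier, ∃ x : M.carrier, B (.inl x) (.inl y) := by
    intro y
    obtain ⟨x | k, hx⟩ := tot' (.inl y)
    · exact ⟨x, hx⟩
    · exact absurd (hB.fn _ _ _ hx (bk k)) (by simp)
  choose F hF using t1
  choose G hG using t2
  have fn : ∀ {x y y'}, B (.inl x) (.inl y) → B (.inl x) (.inl y') → y = y' :=
    fun k1 k2 => Sum.inl_injective (hB.fn _ _ _ k1 k2)
  have ij : ∀ {x x' y}, B (.inl x) (.inl y) → B (.inl x') (.inl y) → x = x' :=
    fun k1 k2 => Sum.inl_injective (hB.inj _ _ _ k1 k2)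
  have Fo : F M.root = M'.root := fn (hF _) bo
  have Fo' : F (M.e M.root) = M'.e M'.root := fn (hF _) bo'
  refine ⟨⟨F, G, fun x => ij (hG _) (hF _), fun y => fn (hF _) (hG _)⟩, ?_, ?_, Fo⟩
  · intro x
    exact fn (hF _) (hB.sw _ _ (hF x))
  · intro x
    change F (M.e x) = M'.e (F x)
    by_cases h1 : x = M.root
    · subst h1; rw [Fo', Fo]
    by_cases h2 : x = M.e M.root
    · subst h2; rw [h.e_sq, Fo', h'.e_sq, Fo]
    have h3 : F x ≠ M'.root := fun k => h1 (ij (k ▸ hF x) bo)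
    have h4 : F x ≠ M'.e M'.root := fun k => h2 (ij (k ▸ hF x) bo')
    have := hB.se _ _ (hF x)
    simp only [xe, h1, h2, h3, h4, if_false] at this
    exact fn (hF _) this

lemma creads_surj {t : Term} (hl : Linear [] t) (hs : 1 < t.size) :
    ∃ M, IsCMap M ∧ Nat.card M.carrier = 3 * (t.size - 1) ∧ CReads M t := by
  classical
  obtain ⟨D, hf, w, e, r, ρ, hg, hrd, -, -, hc, hcard⟩ := map_exists hl
  have ff : ∀ x ∈ t.freeList, False := fun x hx => by simpa using linear_free hl x hx
  have hr := hrd.root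
  have hleaf : ∀ x, w x = x → x = r := by
    intro x hx
    by_contra hne
    obtain ⟨z, hz, -⟩ := reads_leaf hg hrd x (hc x) hx hne
    exact ff z hz
  have hd : w (e r) ≠ e r := fun h => hg.ef r (hleaf _ h)
  have hdist := root_distinct hg hr hd
  have hi := @Good.inj _ _ _ hg
  have he := @Good.einj _ _ _ hg
  have h3 := hg.w3
  have h2 := hg.e2
  have hef := hg.ef
  obtain ⟨d, hd0⟩ : ∃ d, d = e r := ⟨_, rfl⟩
  obtain ⟨a, ha0⟩ : ∃ a, a = w d := ⟨_, rfl⟩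
  obtain ⟨b, hb0⟩ : ∃ b, b = w a := ⟨_, rfl⟩
  rw [← hd0, ← ha0, ← hb0] at hdist
  obtain ⟨n1, n2, n3, n4, n5, n6⟩ := hdist
  have wb : w b = d := by rw [hb0, ha0, h3]
  have ed : e d = r := by rw [hd0, h2]
  have hab : e a ≠ b := by
    intro hab
    have hall : ∀ x, x ∈ ({r, d, a, b} : Finset D) := by
      intro x
      simp only [Finset.mem_insert, Finset.mem_singleton]
      refine (Conn.closed hg (P := fun x => x = r ∨ x = d ∨ x = a ∨ x = b) ?_ ?_ (hc x)).1
        (Or.inl rfl)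
      · grind
      · grind
    have : Nat.card D ≤ 4 := by
      have hF : Fintype D := Fintype.ofFinite D
      rw [Nat.card_eq_fintype_card, ← Finset.card_univ]
      calc Finset.univ.card ≤ ({r, d, a, b} : Finset D).card :=
            Finset.card_le_card (fun x _ => hall x)
        _ ≤ 4 := Finset.card_le_four
    simp at hcard
    omega
  let P : D → Prop := fun x => x ≠ r ∧ x ≠ d ∧ x ≠ a ∧ x ≠ b
  have Pw : ∀ x, P x → P (w x) := by
    intro x hx
    simp only [P] at hx ⊢
    grind
  have Pa : P (e a) := by
    simp only [P]; grind
  have Pb : P (e b) := by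
    simp only [P]; grind
  have Pe : ∀ x, P x → x ≠ e a → x ≠ e b → P (e x) := by
    intro x hx k1 k2
    simp only [P] at hx ⊢
    grind
  have neab : e a ≠ e b := fun h => n6 (he h)
  let V : {x // P x} → {x // P x} := fun x => ⟨w x.1, Pw _ x.2⟩
  let E : {x // P x} → {x // P x} := fun x =>
    if k1 : x.1 = e a then ⟨e b, Pb⟩ else if k2 : x.1 = e b then ⟨e a, Pa⟩ else
      ⟨e x.1, Pe _ x.2 k1 k2⟩
  have Ea : ∀ h, E ⟨e a, h⟩ = ⟨e b, Pb⟩ := fun h => by simp [E]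
  have Eb : ∀ h, E ⟨e b, h⟩ = ⟨e a, Pa⟩ := fun h => by simp [E, neab.symm]
  have Ex : ∀ x h (k1 : x ≠ e a) (k2 : x ≠ e b), E ⟨x, h⟩ = ⟨e x, Pe _ h k1 k2⟩ :=
    fun x h k1 k2 => by simp [E, k1, k2]
  let M : CMap := ⟨{x // P x}, V, E, ⟨e a, Pa⟩⟩
  have Esq : ∀ x, E (E x) = x := by
    rintro ⟨x, hx⟩
    by_cases k1 : x = e a
    · subst k1; rw [Ea, Eb]
    by_cases k2 : x = e b
    · subst k2; rw [Eb, Ea]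
    rw [Ex x hx k1 k2, Ex]
    · simp [h2]
    · intro h
      exact hx.2.2.1 (he h)
    · intro h
      exact hx.2.2.2 (he h)
  have Efr : ∀ x, E x ≠ x := by
    rintro ⟨x, hx⟩
    by_cases k1 : x = e a
    · subst k1; rw [Ea]; simp [neab.symm]
    by_cases k2 : x = e b
    · subst k2; rw [Eb]; simp [neab]
    rw [Ex x hx k1 k2]; simp [hef]
  have V3 : ∀ x, V (V (V x)) = x := fun x => Subtype.ext (h3 _)
  have key : ∀ x : {x // P x}, Conn V E ⟨e a, Pa⟩ x := by
    have cb : Conn V E ⟨e a, Pa⟩ ⟨e b, Pb⟩ := by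
      have := Conn.se (w := V) (e := E) ⟨e a, Pa⟩
      rwa [Ea] at this
    have : ∀ x, ∀ h : P x, Conn V E ⟨e a, Pa⟩ ⟨x, h⟩ := by
      intro x
      refine (Conn.closed hg (P := fun x => ∀ h : P x, Conn V E ⟨e a, Pa⟩ ⟨x, h⟩) ?_ ?_
        (hc x)).1 (fun h => absurd rfl h.1)
      · intro x hx h
        have hP : P x := by
          simp only [P] at h ⊢
          grind
        exact (hx hP).trans (Conn.sw (w := V) (e := E) ⟨x, hP⟩)
      · intro x hx h
        by_cases k1 : x = a
        · subst k1; exact Conn.refl _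
        by_cases k2 : x = b
        · subst k2; exact cb
        have hP : P x := by
          simp only [P] at h ⊢
          grind
        have k3 : x ≠ e a := by
          rintro rfl; exact h.2.2.1 (h2 _)
        have k4 : x ≠ e b := by
          rintro rfl; exact h.2.2.2 (h2 _)
        have := Conn.se (w := V) (e := E) ⟨x, hP⟩
        rw [Ex x hP k3 k4] at this
        exact (hx hP).trans this
    exact fun x => this x.1 x.2
  have hM : IsCMap M := by
    refine ⟨V3, Esq, fun x y => (key x).symm.trans (key y), ?_, Efr⟩
    intro x hx
    exact x.2.1 (hleaf _ (congrArg Subtype.val hx))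
  let f : {x // P x} ⊕ Four → D
    | .inl x => x.1
    | .inr .r => r
    | .inr .d => d
    | .inr .a => a
    | .inr .b => b
  have finj : Injective f := by
    rintro (⟨x, hx⟩ | _ | _ | _ | _) (⟨y, hy⟩ | _ | _ | _ | _) h <;>
      simp only [f] at h <;> first | rfl | (simp only [P] at * ; grind)
  have fsurj : Surjective f := by
    intro x
    by_cases hx : P x
    · exact ⟨.inl ⟨x, hx⟩, rfl⟩
    · have : x = r ∨ x = d ∨ x = a ∨ x = b := by
        simp only [P] at hx; grind
      rcases this with rfl | rfl | rfl | rfl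
      · exact ⟨.inr .r, rfl⟩
      · exact ⟨.inr .d, rfl⟩
      · exact ⟨.inr .a, rfl⟩
      · exact ⟨.inr .b, rfl⟩
  have fe : ∀ x, f (xe M.e M.root x) = e (f x) := by
    rintro (⟨x, hx⟩ | _ | _ | _ | _)
    · by_cases k1 : x = e a
      · subst k1; simp [xe, M, f, h2]
      by_cases k2 : x = e b
      · subst k2; simp [xe, M, f, h2, Ea, neab.symm]
      simp [xe, M, f, k1, k2, Ea, Ex x hx k1 k2]
    · exact hd0
    · exact ed.symm
    · rfl
    · simp [xe, M, f, Ea]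
  have fw : ∀ x, f (xw M.v x) = w (f x) := by
    rintro (⟨x, hx⟩ | _ | _ | _ | _)
    · rfl
    · exact hr.symm
    · exact ha0
    · exact hb0
    · exact wb.symm
  refine ⟨M, hM, ?_, fun _ => .inr .r, ?_⟩
  · have h44 : Nat.card Four = 4 := by rw [Nat.card_eq_fintype_card]; rfl
    have := Nat.card_eq_of_bijective f ⟨finj, fsurj⟩
    rw [Nat.card_sum, h44, hcard] at this
    change Nat.card {x // P x} = _
    simp at this
    omega
  · refine (reads_transport (f := f) finj fe hM.good hg fw).1 ?_
    exact reads_congr (fun x hx => (ff x hx).elim) hrd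

/-! ## Alpha equivalence of closed terms -/

lemma alpha_closed {p q : List ℕ × Term} (h : Alpha p q) :
    (p.1 = [] ↔ q.1 = []) ∧ (p.1 = [] → TAlpha p.2 q.2) := by
  induction h with
  | rel x y h =>
    cases h with
    | free => simp
    | bound h => exact ⟨Iff.rfl, fun _ => Relation.EqvGen.rel _ _ h⟩
  | refl x => exact ⟨Iff.rfl, fun _ => TAlpha.refl _⟩
  | symm x y _ ih => exact ⟨ih.1.symm, fun h => (ih.2 (ih.1.2 h)).symm⟩
  | trans x y z _ _ i1 i2 =>
    exact ⟨i1.1.trans i2.1, fun h => (i1.2 h).trans (i2.2 (i1.1.1 h))⟩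

lemma alpha_of_talpha {Γ : List ℕ} {t t' : Term} (h : TAlpha t t') : Alpha (Γ, t) (Γ, t') := by
  induction h with
  | rel x y h => exact Relation.EqvGen.rel _ _ (.bound h)
  | refl x => exact Relation.EqvGen.refl _
  | symm x y _ ih => exact Relation.EqvGen.symm _ _ ih
  | trans x y z _ _ i1 i2 => exact Relation.EqvGen.trans _ _ _ i1 i2

lemma quot_alpha {n : ℕ} {p q : ClosedLin n}
    (h : Quot.mk (fun a b : ClosedLin n => Alpha a.val b.val) p = Quot.mk _ q) :
    TAlpha p.1.2 q.1.2 := by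
  have h' := Quot.eqvGen_exact h
  clear h
  have : Alpha p.1 q.1 := by
    induction h' with
    | rel x y h => exact h
    | refl x => exact Relation.EqvGen.refl _
    | symm x y _ ih => exact Relation.EqvGen.symm _ _ ih
    | trans x y z _ _ i1 i2 => exact Relation.EqvGen.trans _ _ _ i1 i2
  exact (alpha_closed this).2 p.2.2.1

end LinMap

/-- For every `n > 1`, the number of alpha-equivalence classes of closed
linear lambda terms with `n` total applications and abstractions equals the
number of isomorphism classes of classical rooted trivalent maps with
`n - 1` trivalent vertices. -/
theorem card_closed_terms_eq_card_classical_maps :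
    ∀ n : ℕ, 1 < n →
      Nat.card (Quot (fun a b : ClosedLin n => Alpha a.val b.val)) =
      Nat.card (Quot (fun A B : ClassicalRTM (n - 1) => CIso A.val B.val)) := by
  intro n hn
  have hex : ∀ M : ClassicalRTM (n - 1), ∃ t, Linear [] t ∧ t.size = n ∧
      LinMap.CReads M.1 t := by
    intro M
    obtain ⟨t, h1, h2, h3⟩ := LinMap.creads_exists M.2.1 (m := n - 1) (by omega) M.2.2
    exact ⟨t, h1, by omega, h3⟩
  choose T hT1 hT2 hT3 using hex
  let F : ClassicalRTM (n - 1) → ClosedLin n := fun M => ⟨([], T M), hT1 M, rfl, hT2 M⟩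
  let G : Quot (fun A B : ClassicalRTM (n - 1) => CIso A.val B.val) →
      Quot (fun a b : ClosedLin n => Alpha a.val b.val) :=
    Quot.lift (fun M => Quot.mk _ (F M)) (by
      intro A B h
      apply Quot.sound
      exact LinMap.alpha_of_talpha (LinMap.creads_unique B.2.1 (hT1 A) (hT1 B)
        (LinMap.creads_iso A.2.1 B.2.1 h (hT3 A)) (hT3 B)))
  symm
  apply Nat.card_eq_of_bijective G
  constructor
  · intro x y
    induction x using Quot.ind with | _ A =>
    induction y using Quot.ind with | _ B =>
    intro h
    apply Quot.sound
    have ht : LinMap.TAlpha (T A) (T B) := LinMap.quot_alpha h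
    obtain ⟨ρ, hr⟩ := hT3 A
    exact LinMap.creads_inj A.2.1 B.2.1 (hT1 B) ⟨ρ, (LinMap.reads_alpha ht).1 hr⟩ (hT3 B)
  · intro y
    induction y using Quot.ind with | _ p =>
    obtain ⟨⟨Γ, t⟩, h1, h2, h3⟩ := p
    simp only at h1 h2 h3
    subst h2
    obtain ⟨M, k1, k2, k3⟩ := LinMap.creads_surj h1 (by omega)
    have k4 : Nat.card M.carrier = 3 * (n - 1) := by rw [k2, h3]
    let M' : ClassicalRTM (n - 1) := ⟨M, k1, k4⟩
    refine ⟨Quot.mk _ M', ?_⟩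
    apply Quot.sound
    exact LinMap.alpha_of_talpha (LinMap.creads_unique k1 (hT1 M') h1 (hT3 M') k3)
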